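/- A tau-structure associated to the Toda lattice derivations exists, and it is unique up to replacing Ω_{p,q} by Ω_{p,q} + c_{p,q} and S_p by S_p + a_p, where c_{p,q} = c_{q,p} and a_p are arbitrary constants. In particular, there is a unique canonical tau-structure, i.e., one for which every Ω_{p,q} and every S_p vanishes under the substitution v_i = 0, w_i = 0 for all i ∈ ℤ. -/

import Mathlib

open MvPolynomial

noncomputable section

/-- The ring 𝒜 = ℤ[v_i, w_i : i ∈ ℤ], with variables indexed by ℤ ⊕ ℤ
(`Sum.inl i` is `v_i`, `Sum.inr i` is `w_i`). -/
abbrev 𝒜 : Type := MvPolynomial (ℤ ⊕ ℤ) ℤ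

/-- The variable v_i. -/
def vV (i : ℤ) : 𝒜 := X (Sum.inl i)
/-- The variable w_i. -/
def wV (i : ℤ) : 𝒜 := X (Sum.inr i)

/-- The shift operator Λ, as a ring (ℤ-algebra) automorphism of 𝒜, with
Λ(v_i) = v_{i+1}, Λ(w_i) = w_{i+1}. -/
def Λs : 𝒜 ≃ₐ[ℤ] 𝒜 :=
  MvPolynomial.renameEquiv ℤ (Equiv.sumCongr (Equiv.addRight (1 : ℤ)) (Equiv.addRight (1 : ℤ)))

/-- Integer powers Λ^k of the shift automorphism. -/
def Λz (k : ℤ) : 𝒜 ≃ₐ[ℤ] 𝒜 := Λs ^ k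

/-- The identity difference operator, as its family of coefficients (coefficient of Λ^m). -/
def oneOp : ℤ → 𝒜 := fun m => if m = 0 then 1 else 0

/-- Left multiplication by L = Λ + v_0 + w_0 Λ^{-1} on difference operators,
written in terms of coefficients: `(L·P)_m = Λ(P_{m-1}) + v_0 P_m + w_0 Λ^{-1}(P_{m+1})`. -/
def mulL (P : ℤ → 𝒜) : ℤ → 𝒜 := fun m => Λs (P (m - 1)) + vV 0 * P m + wV 0 * Λs.symm (P (m + 1))

/-- The coefficients of the difference operator L^k. -/
def Lpow (k : ℕ) : ℤ → 𝒜 := mulL^[k] oneOp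

/-- The nonnegative part P_+ of a difference operator. -/
def plusPart (P : ℤ → 𝒜) : ℤ → 𝒜 := fun m => if 0 ≤ m then P m else 0

/-- Right multiplication by L on difference operators:
`(P·L)_m = P_{m-1} + P_m Λ^m(v_0) + P_{m+1} Λ^{m+1}(w_0)`. -/
def mulRL (P : ℤ → 𝒜) : ℤ → 𝒜 := fun m =>
  P (m - 1) + P m * Λz m (vV 0) + P (m + 1) * Λz (m + 1) (wV 0)

/-- The coefficients of the commutator [A_k, L] = A_k L - L A_k, where A_k = (L^{k+1})_+. -/
def brkt (k : ℕ) : ℤ → 𝒜 := fun m =>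
  mulRL (plusPart (Lpow (k + 1))) m - mulL (plusPart (Lpow (k + 1))) m

/-- The k-th Toda lattice derivation D_k : the unique admissible derivation of 𝒜
(i.e. derivation commuting with Λ) with D_k(v_0) = Coef([A_k,L],0),
D_k(w_0) = Coef([A_k,L],-1); hence D_k(v_i) = Λ^i(Coef([A_k,L],0)) and
D_k(w_i) = Λ^i(Coef([A_k,L],-1)). -/
def Dtoda (k : ℕ) : Derivation ℤ 𝒜 𝒜 :=
  MvPolynomial.mkDerivation ℤ (fun s => match s with
    | Sum.inl i => Λz i (brkt k 0)
    | Sum.inr i => Λz i (brkt k (-1)))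


/-- A tau-structure associated to the Toda lattice derivations: a family
(Ω_{p,q}, S_p)_{p,q ≥ 0} of elements of 𝒜 satisfying Ω_{p,q} = Ω_{q,p},
D_r(Ω_{p,q}) = D_q(Ω_{p,r}), (Λ - 1)(Ω_{p,q}) = D_q(S_p), and
w_0 (1 - Λ^{-1})(S_p) = D_p(w_0). -/
structure TauStructure where
  Ω : ℕ → ℕ → 𝒜
  S : ℕ → 𝒜
  symm : ∀ p q, Ω p q = Ω q p
  compat : ∀ p q r, Dtoda r (Ω p q) = Dtoda q (Ω p r)
  shift_eq : ∀ p q, Λs (Ω p q) - Ω p q = Dtoda q (S p)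
  w_eq : ∀ p, wV 0 * (S p - Λs.symm (S p)) = Dtoda p (wV 0)

/-- A tau-structure is canonical if all its members vanish under the substitution
v_i = 0, w_i = 0 for all i ∈ ℤ. -/
def TauStructure.IsCanonical (T : TauStructure) : Prop :=
  (∀ p q, MvPolynomial.eval (fun _ => (0 : ℤ)) (T.Ω p q) = 0) ∧
  (∀ p, MvPolynomial.eval (fun _ => (0 : ℤ)) (T.S p) = 0)


/-! ### Basic facts about the shift -/

lemma Λz_add (a b : ℤ) (x : 𝒜) : Λz (a + b) x = Λz a (Λz b x) := by
  simp only [Λz, zpow_add]; rfl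

lemma Λz_zero (x : 𝒜) : Λz 0 x = x := by simp [Λz]

lemma Λz_one (x : 𝒜) : Λz 1 x = Λs x := by simp [Λz]

lemma Λz_neg_one (x : 𝒜) : Λz (-1) x = Λs.symm x := by
  simp only [Λz, zpow_neg, zpow_one]; rfl

lemma Λs_v (i : ℤ) : Λs (X (Sum.inl i)) = X (Sum.inl (i + 1)) := by
  simp [Λs]

lemma Λs_w (i : ℤ) : Λs (X (Sum.inr i)) = X (Sum.inr (i + 1)) := by
  simp [Λs]

lemma Λs_fixed (f : 𝒜) (h : Λs f = f) : ∃ c : ℤ, f = C c := by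
  refine ⟨f.coeff 0, vars_eq_empty_iff_eq_C.1 ?_⟩
  let e : ℤ ⊕ ℤ → ℤ ⊕ ℤ := Equiv.sumCongr (Equiv.addRight (1 : ℤ)) (Equiv.addRight (1 : ℤ))
  let ht : ℤ ⊕ ℤ → ℤ := Sum.elim id id
  have hr : rename e f = f := h
  by_contra hne
  obtain ⟨x, hx, hmin⟩ := Finset.exists_min_image f.vars ht (Finset.nonempty_iff_ne_empty.2 hne)
  have hx2 : x ∈ (rename e f).vars := by rw [hr]; exact hx
  obtain ⟨y, hy, rfl⟩ := mem_vars_rename e f hx2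
  have := hmin y hy
  rcases y with y | y <;> simp [e, ht] at this

/-- evaluation at zero -/
abbrev ev0 : 𝒜 →+* ℤ := MvPolynomial.eval (fun _ => (0 : ℤ))

lemma ev0_Λs (x : 𝒜) : ev0 (Λs x) = ev0 x := by
  simp only [ev0, Λs, renameEquiv_apply, eval_rename]; rfl

lemma ev0_Λs_symm (x : 𝒜) : ev0 (Λs.symm x) = ev0 x := by
  conv_rhs => rw [← Λs.apply_symm_apply x]
  rw [ev0_Λs]

lemma Λz_ind {p : ℤ → Prop} (h0 : p 0) (hs : ∀ i, p i → p (i + 1))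
    (hp : ∀ i, p i → p (i - 1)) (i : ℤ) : p i := by
  induction i using Int.induction_on with
  | zero => exact h0
  | succ i ih => exact hs _ ih
  | pred i ih => exact hp _ ih

lemma ev0_Λz (i : ℤ) (x : 𝒜) : ev0 (Λz i x) = ev0 x := by
  induction i using Λz_ind with
  | h0 => rw [Λz_zero]
  | hs i ih => rw [add_comm, Λz_add, Λz_one, ev0_Λs, ih]
  | hp i ih => rw [sub_eq_add_neg, add_comm, Λz_add, Λz_neg_one, ev0_Λs_symm, ih]

lemma eq_zero_of_fixed (f : 𝒜) (h : Λs f = f) (h0 : ev0 f = 0) : f = 0 := by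
  obtain ⟨c, rfl⟩ := Λs_fixed f h
  simp [ev0] at h0
  simp [h0]

/-! ### The derivations commute with the shift -/

lemma D_v (k : ℕ) (i : ℤ) : Dtoda k (X (Sum.inl i)) = Λz i (brkt k 0) := by
  simp [Dtoda, mkDerivation_X]

lemma D_w (k : ℕ) (i : ℤ) : Dtoda k (X (Sum.inr i)) = Λz i (brkt k (-1)) := by
  simp [Dtoda, mkDerivation_X]

lemma D_Λs (k : ℕ) (x : 𝒜) : Dtoda k (Λs x) = Λs (Dtoda k x) := by
  induction x using MvPolynomial.induction_on with
  | C a =>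
    have h : Λs (C a) = C a := Λs.commutes a
    rw [h]; simp
  | add p q hp hq => simp [hp, hq]
  | mul_X p s hp =>
    rw [map_mul, Derivation.leibniz, Derivation.leibniz, hp]
    rcases s with i | i
    · simp [Λs_v, D_v, add_comm i 1, Λz_add, Λz_one]
    · simp [Λs_w, D_w, add_comm i 1, Λz_add, Λz_one]

lemma D_Λs_symm (k : ℕ) (x : 𝒜) : Dtoda k (Λs.symm x) = Λs.symm (Dtoda k x) := by
  apply Λs.injective
  rw [← D_Λs]; simp

lemma D_Λz (k : ℕ) (i : ℤ) (x : 𝒜) : Dtoda k (Λz i x) = Λz i (Dtoda k x) := by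
  induction i using Λz_ind with
  | h0 => simp [Λz_zero]
  | hs i ih => rw [add_comm, Λz_add, Λz_one, D_Λs, ih, Λz_add, Λz_one]
  | hp i ih => rw [sub_eq_add_neg, add_comm, Λz_add, Λz_neg_one, D_Λs_symm, ih, Λz_add, Λz_neg_one]

/-! ### The ring of difference operators -/

/-- The group of shifts. -/
abbrev ShG : Type := Multiplicative ℤ

instance shAct : MulSemiringAction ShG 𝒜 :=
  MulSemiringAction.compHom 𝒜 (zpowersHom (𝒜 ≃ₐ[ℤ] 𝒜) Λs)

lemma sh_smul (g : ShG) (x : 𝒜) : g • x = Λz g.toAdd x := rfl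

/-- The ring of difference operators. -/
abbrev DOp : Type := SkewMonoidAlgebra 𝒜 ShG

/-- The coefficient of `Λ^m`. -/
def cf (P : DOp) (m : ℤ) : 𝒜 := P.coeff (Multiplicative.ofAdd m)

lemma cf_add (P Q : DOp) (m : ℤ) : cf (P + Q) m = cf P m + cf Q m := by simp [cf]
lemma cf_sub (P Q : DOp) (m : ℤ) : cf (P - Q) m = cf P m - cf Q m := by
  have := cf_add (P - Q) Q m
  rw [sub_add_cancel] at this
  rw [this]; ring
lemma cf_zero (m : ℤ) : cf 0 m = 0 := by simp [cf]

lemma cf_ext {P Q : DOp} (h : ∀ m, cf P m = cf Q m) : P = Q :=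
  SkewMonoidAlgebra.ext fun a => h a.toAdd

/-- The monomial `a Λ^m`. -/
def mono (m : ℤ) (a : 𝒜) : DOp := SkewMonoidAlgebra.single (Multiplicative.ofAdd m) a

lemma cf_mono (m n : ℤ) (a : 𝒜) : cf (mono m a) n = if m = n then a else 0 := by
  simp [cf, mono, Finsupp.single_apply]

lemma cf_mono_mul (m n : ℤ) (a : 𝒜) (P : DOp) : cf (mono m a * P) n = a * Λz m (cf P (n - m)) := by
  simp only [cf, mono, SkewMonoidAlgebra.coeff_single_mul, sh_smul]
  congr 3
  rw [sub_eq_neg_add]; rfl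

lemma cf_mul_mono (m n : ℤ) (a : 𝒜) (P : DOp) :
    cf (P * mono m a) n = cf P (n - m) * Λz (n - m) a := by
  simp only [cf, mono, SkewMonoidAlgebra.coeff_mul_single, sh_smul]
  rfl

lemma mono_mul_mono (m n : ℤ) (a b : 𝒜) : mono m a * mono n b = mono (m + n) (a * Λz m b) := by
  simp [mono, SkewMonoidAlgebra.single_mul_single, sh_smul]

/-- The Lax operator. -/
def Lax : DOp := mono 1 1 + mono 0 (vV 0) + mono (-1) (wV 0)

lemma cf_Lax_mul (P : DOp) : cf (Lax * P) = mulL (cf P) := by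
  funext m
  simp [Lax, add_mul, cf_add, cf_mono_mul, mulL, Λz_one, Λz_zero, Λz_neg_one]

lemma cf_mul_Lax (P : DOp) : cf (P * Lax) = mulRL (cf P) := by
  funext m
  simp [Lax, mul_add, cf_add, cf_mul_mono, mulRL]

lemma cf_one : cf 1 = oneOp := by
  funext m
  have : (1 : DOp) = mono 0 1 := rfl
  rw [this, cf_mono, oneOp]; simp [eq_comm]

lemma cf_Lax_pow (k : ℕ) : cf (Lax ^ k) = Lpow k := by
  induction k with
  | zero => simp [cf_one, Lpow]
  | succ k ih => rw [pow_succ', cf_Lax_mul, ih, Lpow, Lpow, Function.iterate_succ_apply']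

/-- additive maps from maps of finitely supported functions -/
def liftF (f : (ShG →₀ 𝒜) →+ (ShG →₀ 𝒜)) : DOp →+ DOp :=
  (SkewMonoidAlgebra.coeffAddEquiv.symm.toAddMonoidHom.comp f).comp
    SkewMonoidAlgebra.coeffAddEquiv.toAddMonoidHom

/-- The nonnegative part. -/
def pls : DOp →+ DOp := liftF (Finsupp.filterAddHom (fun g : ShG => 0 ≤ g.toAdd))

lemma cf_pls (P : DOp) : cf (pls P) = plusPart (cf P) := by
  funext m
  change (Finsupp.filter (fun g : ShG => 0 ≤ g.toAdd) P.coeff) (Multiplicative.ofAdd m) = _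
  rw [Finsupp.filter_apply]; rfl

/-- coefficientwise action of the derivations -/
def dR (k : ℕ) : DOp →+ DOp :=
  liftF (Finsupp.mapRange.addMonoidHom (Dtoda k : 𝒜 →ₗ[ℤ] 𝒜).toAddMonoidHom)

lemma cf_dR (k : ℕ) (P : DOp) (m : ℤ) : cf (dR k P) m = Dtoda k (cf P m) := by
  change (Finsupp.mapRange.addMonoidHom (Dtoda k : 𝒜 →ₗ[ℤ] 𝒜).toAddMonoidHom P.coeff) _ = _
  simp [cf]

lemma dR_mono (k : ℕ) (m : ℤ) (a : 𝒜) : dR k (mono m a) = mono m (Dtoda k a) := by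
  apply cf_ext; intro n
  rw [cf_dR, cf_mono, cf_mono]
  split_ifs <;> simp

lemma mono_add (m : ℤ) (a b : 𝒜) : mono m (a + b) = mono m a + mono m b :=
  SkewMonoidAlgebra.single_add _ _ _

lemma dOp_ind {p : DOp → Prop} (f : DOp) (zero : p 0) (mon : ∀ m a, p (mono m a))
    (add : ∀ f g, p f → p g → p (f + g)) : p f :=
  SkewMonoidAlgebra.induction_on f zero (fun g a => mon g.toAdd a) add

lemma dR_mul (k : ℕ) (P Q : DOp) : dR k (P * Q) = dR k P * Q + P * dR k Q := by
  induction P using dOp_ind with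
  | zero => simp
  | add f g hf hg => rw [add_mul, map_add, hf, hg, map_add]; noncomm_ring
  | mon m a =>
    induction Q using dOp_ind with
    | zero => simp
    | add f g hf hg => rw [mul_add, map_add, hf, hg, map_add]; noncomm_ring
    | mon n b =>
      rw [mono_mul_mono, dR_mono, dR_mono, dR_mono, mono_mul_mono, mono_mul_mono, ← mono_add]
      congr 1
      rw [Derivation.leibniz, D_Λz, smul_eq_mul, smul_eq_mul]; ring

lemma dR_pls (k : ℕ) (P : DOp) : dR k (pls P) = pls (dR k P) := by
  apply cf_ext; intro m
  rw [cf_dR, cf_pls, cf_pls, plusPart, plusPart]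
  split_ifs
  · rw [cf_dR]
  · simp

/-! ### Degrees -/

/-- only nonnegative powers of the shift -/
def NN (P : DOp) : Prop := ∀ m < 0, cf P m = 0
/-- only negative powers of the shift -/
def NG (P : DOp) : Prop := ∀ m, 0 ≤ m → cf P m = 0

lemma NN.mul {P Q : DOp} (hP : NN P) (hQ : NN Q) : NN (P * Q) := by
  intro m hm
  rw [cf, SkewMonoidAlgebra.coeff_mul_left, SkewMonoidAlgebra.sum_def, Finsupp.sum]
  apply Finset.sum_eq_zero
  intro g _
  rcases lt_or_ge g.toAdd 0 with h | h
  · have : P.coeff g = 0 := hP _ h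
    rw [this, zero_mul]
  · have : Q.coeff (g⁻¹ * Multiplicative.ofAdd m) = 0 := hQ (-g.toAdd + m) (by omega)
    rw [this, smul_zero, mul_zero]

lemma NG.mul {P Q : DOp} (hP : NG P) (hQ : NG Q) : NG (P * Q) := by
  intro m hm
  rw [cf, SkewMonoidAlgebra.coeff_mul_left, SkewMonoidAlgebra.sum_def, Finsupp.sum]
  apply Finset.sum_eq_zero
  intro g _
  rcases lt_or_ge g.toAdd 0 with h | h
  · have : Q.coeff (g⁻¹ * Multiplicative.ofAdd m) = 0 := hQ (-g.toAdd + m) (by omega)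
    rw [this, smul_zero, mul_zero]
  · have : P.coeff g = 0 := hP _ h
    rw [this, zero_mul]

lemma NN_pls (P : DOp) : NN (pls P) := by
  intro m hm
  rw [cf_pls, plusPart, if_neg (by omega)]

lemma NG_sub_pls (P : DOp) : NG (P - pls P) := by
  intro m hm
  rw [cf_sub, cf_pls, plusPart, if_pos hm, sub_self]

lemma NN.pls_eq {P : DOp} (h : NN P) : pls P = P := by
  apply cf_ext; intro m
  rw [cf_pls, plusPart]
  split_ifs with hm
  · rfl
  · rw [h m (by omega)]

lemma NG.pls_eq {P : DOp} (h : NG P) : pls P = 0 := by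
  apply cf_ext; intro m
  rw [cf_pls, plusPart, cf_zero]
  split_ifs with hm
  · exact h m hm
  · rfl

/-! ### Lax equations and commutativity of the flows -/

/-- The operator `A_k = (L^{k+1})_+`. -/
def Aop (k : ℕ) : DOp := pls (Lax ^ (k + 1))

lemma cf_brkt (k : ℕ) (m : ℤ) : cf (Aop k * Lax - Lax * Aop k) m = brkt k m := by
  rw [cf_sub, cf_mul_Lax, cf_Lax_mul, brkt, Aop, cf_pls, cf_Lax_pow]

lemma brkt_low (k : ℕ) (m : ℤ) (hm : m < -1) : brkt k m = 0 := by
  rw [← cf_brkt, cf_sub, cf_mul_Lax, cf_Lax_mul, mulRL, mulL]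
  have h := NN_pls (Lax ^ (k + 1))
  rw [Aop, h (m - 1) (by omega), h m (by omega), h (m + 1) (by omega)]
  simp

lemma brkt_high (k : ℕ) (m : ℤ) (hm : 0 < m) : brkt k m = 0 := by
  have e : Aop k * Lax - Lax * Aop k =
      Lax * (Lax ^ (k + 1) - Aop k) - (Lax ^ (k + 1) - Aop k) * Lax := by
    rw [mul_sub, sub_mul, ← pow_succ, ← pow_succ']; abel
  rw [← cf_brkt, e, cf_sub, cf_mul_Lax, cf_Lax_mul, mulRL, mulL]
  have h := NG_sub_pls (Lax ^ (k + 1))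
  rw [Aop, h (m - 1) (by omega), h m (by omega), h (m + 1) (by omega)]
  simp

lemma D_v0 (k : ℕ) : Dtoda k (vV 0) = brkt k 0 := by rw [vV, D_v, Λz_zero]
lemma D_w0 (k : ℕ) : Dtoda k (wV 0) = brkt k (-1) := by rw [wV, D_w, Λz_zero]

lemma dR_Lax (k : ℕ) : dR k Lax = Aop k * Lax - Lax * Aop k := by
  apply cf_ext; intro m
  rw [cf_brkt, Lax, map_add, map_add, dR_mono, dR_mono, dR_mono, D_v0, D_w0, cf_add, cf_add,
    cf_mono, cf_mono, cf_mono]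
  simp only [Derivation.map_one_eq_zero, ite_self, zero_add]
  rcases lt_trichotomy m 0 with h | h | h
  · rcases eq_or_ne m (-1) with h1 | h1
    · subst h1; simp
    · rw [brkt_low k m (by omega), if_neg (by omega), if_neg (by omega), add_zero]
  · subst h; simp
  · rw [brkt_high k m h, if_neg (by omega), if_neg (by omega), add_zero]

lemma dR_one (k : ℕ) : dR k 1 = 0 := by
  have := dR_mono k 0 1
  have h2 : (1 : DOp) = mono 0 1 := rfl
  rw [h2, this, Derivation.map_one_eq_zero]
  apply cf_ext; intro m
  rw [cf_mono, cf_zero, ite_self]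

lemma dR_pow (k n : ℕ) : dR k (Lax ^ n) = Aop k * Lax ^ n - Lax ^ n * Aop k := by
  induction n with
  | zero => simp [dR_one]
  | succ n ih => 
    rw [pow_succ, dR_mul, ih, dR_Lax]
    simp only [mul_sub, sub_mul, mul_assoc]; abel

lemma dR_Aop (k n : ℕ) :
    dR k (Aop n) = pls (Aop k * Lax ^ (n + 1) - Lax ^ (n + 1) * Aop k) := by
  rw [Aop, dR_pls, dR_pow]

lemma zero_curv (q r : ℕ) :
    dR r (Aop q) - dR q (Aop r) + (Aop q * Aop r - Aop r * Aop q) = 0 := by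
  have hq : NN (Aop q) := NN_pls _
  have hr : NN (Aop r) := NN_pls _
  have gq : NG (Lax ^ (q + 1) - Aop q) := NG_sub_pls _
  have gr : NG (Lax ^ (r + 1) - Aop r) := NG_sub_pls _
  have h1 : pls (Aop q * Aop r - Aop r * Aop q) = Aop q * Aop r - Aop r * Aop q := by
    rw [map_sub, (hq.mul hr).pls_eq, (hr.mul hq).pls_eq]
  rw [← h1, dR_Aop, dR_Aop, ← map_sub, ← map_add]
  have hc : Lax ^ (q + 1) * Lax ^ (r + 1) = Lax ^ (r + 1) * Lax ^ (q + 1) := by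
    rw [← pow_add, ← pow_add, add_comm]
  have e : Aop r * Lax ^ (q + 1) - Lax ^ (q + 1) * Aop r -
      (Aop q * Lax ^ (r + 1) - Lax ^ (r + 1) * Aop q) + (Aop q * Aop r - Aop r * Aop q)
      = (Lax ^ (q + 1) - Aop q) * (Lax ^ (r + 1) - Aop r)
        - (Lax ^ (r + 1) - Aop r) * (Lax ^ (q + 1) - Aop q) := by
    simp only [mul_sub, sub_mul, hc]; abel
  rw [e, map_sub, (gq.mul gr).pls_eq, (gr.mul gq).pls_eq, sub_zero]

lemma dR_comm_Lax (q r : ℕ) : dR r (dR q Lax) = dR q (dR r Lax) := by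
  rw [← sub_eq_zero]
  have e : dR r (dR q Lax) - dR q (dR r Lax) =
      (dR r (Aop q) - dR q (Aop r) + (Aop q * Aop r - Aop r * Aop q)) * Lax
      - Lax * (dR r (Aop q) - dR q (Aop r) + (Aop q * Aop r - Aop r * Aop q)) := by
    simp only [dR_Lax, map_sub, dR_mul, mul_sub, sub_mul, mul_add, add_mul, mul_assoc]; abel
  rw [e, zero_curv]; simp

lemma D_comm (q r : ℕ) (x : 𝒜) : Dtoda r (Dtoda q x) = Dtoda q (Dtoda r x) := by
  have hv : Dtoda r (Dtoda q (vV 0)) = Dtoda q (Dtoda r (vV 0)) := by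
    have := congrArg (fun P => cf P 0) (dR_comm_Lax q r)
    simpa [cf_dR, Lax, cf_add, cf_mono] using this
  have hw : Dtoda r (Dtoda q (wV 0)) = Dtoda q (Dtoda r (wV 0)) := by
    have := congrArg (fun P => cf P (-1)) (dR_comm_Lax q r)
    simpa [cf_dR, Lax, cf_add, cf_mono] using this
  have h0 : ⁅Dtoda r, Dtoda q⁆ = 0 := by
    apply MvPolynomial.derivation_ext
    rintro (i | i)
    · rw [Derivation.commutator_apply, D_v, D_v, ← D_v0, ← D_v0, D_Λz, D_Λz, hv]; simp
    · rw [Derivation.commutator_apply, D_w, D_w, ← D_w0, ← D_w0, D_Λz, D_Λz, hw]; simp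
  have := congrArg (fun d => d x) h0
  rw [Derivation.commutator_apply] at this
  exact sub_eq_zero.1 this

/-! ### Values at zero -/

lemma ev0_Lpow (k : ℕ) (m : ℤ) : ev0 (Lpow k m) = if m = k then 1 else 0 := by
  induction k generalizing m with
  | zero => simp only [Lpow, Function.iterate_zero, id, oneOp]; split_ifs <;> simp_all
  | succ k ih =>
    have e : Lpow (k + 1) m = mulL (Lpow k) m := by rw [Lpow, Function.iterate_succ_apply']; rfl
    have hv : ev0 (vV 0) = 0 := by simp [ev0, vV]
    have hw : ev0 (wV 0) = 0 := by simp [ev0, wV]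
    rw [e, mulL, map_add, map_add, map_mul, map_mul, hv, hw, ev0_Λs, ih]
    simp [sub_eq_iff_eq_add]

lemma ev0_plus (k : ℕ) (m : ℤ) : ev0 (plusPart (Lpow k) m) = if m = k then 1 else 0 := by
  rw [plusPart]
  split_ifs with h1 h2 h2
  · rw [ev0_Lpow, if_pos h2]
  · rw [ev0_Lpow, if_neg h2]
  · omega
  · simp

lemma ev0_brkt (k : ℕ) (m : ℤ) : ev0 (brkt k m) = 0 := by
  have hv : ev0 (vV 0) = 0 := by simp [ev0, vV]
  have hw : ev0 (wV 0) = 0 := by simp [ev0, wV]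
  simp only [brkt, mulRL, mulL, map_sub, map_add, map_mul, ev0_Λz, ev0_Λs, hv, hw, ev0_plus]
  simp

lemma ev0_D (k : ℕ) (x : 𝒜) : ev0 (Dtoda k x) = 0 := by
  induction x using MvPolynomial.induction_on with
  | C a => simp
  | add p q hp hq => rw [map_add, map_add, hp, hq, add_zero]
  | mul_X p s hp =>
    rw [Derivation.leibniz, smul_eq_mul, smul_eq_mul, map_add, map_mul, map_mul, hp]
    rcases s with i | i
    · rw [D_v, ev0_Λz, ev0_brkt]; simp
    · rw [D_w, ev0_Λz, ev0_brkt]; simp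

/-! ### Construction of the two-point functions -/

/-- `1 + Λ + ... + Λ^{k-1}` -/
def geo (k : ℕ) (x : 𝒜) : 𝒜 := ∑ i ∈ Finset.range k, Λz i x

lemma geo_shift (k : ℕ) (x : 𝒜) : Λs (geo k x) - geo k x = Λz k x - x := by
  rw [geo, map_sum, ← Finset.sum_sub_distrib]
  have := Finset.sum_range_sub (fun i : ℕ => Λz (i : ℤ) x) k
  simp only [Nat.cast_zero, Λz_zero] at this
  rw [← this]
  apply Finset.sum_congr rfl
  intro i _
  rw [Nat.cast_succ, add_comm (i : ℤ) 1, Λz_add, Λz_one]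

lemma ev0_geo (k : ℕ) (x : 𝒜) (h : k ≠ 0 → ev0 x = 0) : ev0 (geo k x) = 0 := by
  rcases eq_or_ne k 0 with rfl | hk
  · simp [geo]
  · rw [geo, map_sum]
    exact Finset.sum_eq_zero fun i _ => by rw [ev0_Λz, h hk]

/-- The primitive of the residue of a commutator. -/
def Th (A B : DOp) : 𝒜 :=
  ∑ g ∈ A.support, geo g.toAdd.toNat (B.coeff g⁻¹ * g⁻¹ • A.coeff g)

lemma Th_shift (A B : DOp) (hA : NN A) : Λs (Th A B) - Th A B = cf (A * B - B * A) 0 := by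
  have e1 : cf (A * B) 0 = ∑ g ∈ A.support, A.coeff g * g • B.coeff g⁻¹ := by
    rw [cf, SkewMonoidAlgebra.coeff_mul_left, SkewMonoidAlgebra.sum_def']
    simp
  have e2 : cf (B * A) 0 = ∑ g ∈ A.support, B.coeff g⁻¹ * g⁻¹ • A.coeff g := by
    rw [cf, SkewMonoidAlgebra.coeff_mul_right, SkewMonoidAlgebra.sum_def']
    simp
  rw [cf_sub, e1, e2, Th, map_sum, ← Finset.sum_sub_distrib, ← Finset.sum_sub_distrib]
  apply Finset.sum_congr rfl
  intro g hg
  have hg0 : 0 ≤ g.toAdd := by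
    by_contra hlt
    exact SkewMonoidAlgebra.mem_support_iff.1 hg (hA g.toAdd (by omega))
  rw [geo_shift, Int.toNat_of_nonneg hg0, ← sh_smul, smul_mul', smul_inv_smul, mul_comm (g • _)]

/-- The two-point functions. -/
def Om (p q : ℕ) : 𝒜 := Th (Aop q) (Lax ^ (p + 1))

lemma Om_shift (p q : ℕ) : Λs (Om p q) - Om p q = Dtoda q (Lpow (p + 1) 0) := by
  have h : NN (Aop q) := NN_pls _
  rw [Om, Th_shift _ _ h, ← dR_pow, cf_dR, cf_Lax_pow]

lemma ev0_Om (p q : ℕ) : ev0 (Om p q) = 0 := by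
  rw [Om, Th, map_sum]
  apply Finset.sum_eq_zero
  intro g _
  apply ev0_geo
  intro hk
  have : (Lax ^ (p + 1)).coeff g⁻¹ = Lpow (p + 1) (-g.toAdd) := by rw [← cf_Lax_pow]; rfl
  rw [map_mul, this, ev0_Lpow, if_neg, zero_mul]
  omega

lemma res_symm (p q : ℕ) : Dtoda q (Lpow (p + 1) 0) = Dtoda p (Lpow (q + 1) 0) := by
  have h := congrArg (fun P => cf P 0) (zero_curv p q)
  simp only [cf_add, cf_sub, cf_dR, cf_zero, Aop, cf_pls, cf_Lax_pow] at h
  have h0 : ∀ P Q : DOp, NN P → NN Q → cf (P * Q) 0 = cf P 0 * cf Q 0 := by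
    intro P Q hP hQ
    rw [cf, SkewMonoidAlgebra.coeff_mul_left, SkewMonoidAlgebra.sum_def, Finsupp.sum,
      Finset.sum_eq_single 1]
    · simp [cf]
    · intro g _ hg
      rcases lt_trichotomy g.toAdd 0 with h | h | h
      · have : P.coeff g = 0 := hP _ h
        rw [this, zero_mul]
      · exact absurd h hg
      · have : Q.coeff (g⁻¹ * Multiplicative.ofAdd 0) = 0 := hQ (-g.toAdd + 0) (by omega)
        rw [this, smul_zero, mul_zero]
    · intro hn
      rw [Finsupp.notMem_support_iff.1 hn, zero_mul]
  rw [h0 _ _ (NN_pls _) (NN_pls _), h0 _ _ (NN_pls _) (NN_pls _), mul_comm, sub_self,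
    add_zero] at h
  simpa [plusPart, sub_eq_zero] using h

/-- The tau-structure constructed from the Lax operator. -/
def tau0 : TauStructure where
  Ω := Om
  S p := Lpow (p + 1) 0
  symm p q := by
    rw [← sub_eq_zero]
    apply eq_zero_of_fixed
    · have h1 := Om_shift p q
      have h2 := Om_shift q p
      rw [res_symm p q] at h1
      rw [map_sub]
      linear_combination h1 - h2
    · rw [map_sub, ev0_Om, ev0_Om, sub_zero]
  compat p q r := by
    rw [← sub_eq_zero]
    apply eq_zero_of_fixed
    · have h1 := congrArg (Dtoda r) (Om_shift p q)
      have h2 := congrArg (Dtoda q) (Om_shift p r)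
      rw [D_comm, ← h2, map_sub, map_sub, D_Λs, D_Λs] at h1
      rw [map_sub]
      linear_combination h1
    · rw [map_sub, ev0_D, ev0_D, sub_zero]
  shift_eq := Om_shift
  w_eq p := by
    rw [D_w0]
    simp [brkt, mulRL, mulL, plusPart, Λz_zero]
    ring

lemma Λs_C (c : ℤ) : Λs (C c) = C c := Λs.commutes c
lemma Λs_symm_C (c : ℤ) : Λs.symm (C c) = C c := Λs.symm.commutes c

lemma tau_unique (T T' : TauStructure) : ∃ (c : ℕ → ℕ → ℤ) (a : ℕ → ℤ),
      (∀ p q, c p q = c q p) ∧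
      (∀ p q, T'.Ω p q = T.Ω p q + MvPolynomial.C (c p q)) ∧
      (∀ p, T'.S p = T.S p + MvPolynomial.C (a p)) := by
  have hS : ∀ p, ∃ a : ℤ, T'.S p = T.S p + MvPolynomial.C a := by
    intro p
    have h := (T'.w_eq p).trans (T.w_eq p).symm
    have hw : wV 0 ≠ 0 := X_ne_zero _
    have h2 := mul_left_cancel₀ hw h
    obtain ⟨a, ha⟩ := Λs_fixed (T'.S p - T.S p) (by
      rw [← Λs.symm.injective.eq_iff, AlgEquiv.symm_apply_apply, map_sub]
      linear_combination h2)
    exact ⟨a, by rw [← ha]; ring⟩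
  choose a ha using hS
  have hO : ∀ p q, ∃ c : ℤ, T'.Ω p q = T.Ω p q + MvPolynomial.C c := by
    intro p q
    obtain ⟨c, hc⟩ := Λs_fixed (T'.Ω p q - T.Ω p q) (by
      have h1 := T'.shift_eq p q
      have h2 := T.shift_eq p q
      rw [ha, map_add, derivation_C, add_zero] at h1
      rw [map_sub]
      linear_combination h1 - h2)
    exact ⟨c, by rw [← hc]; ring⟩
  choose c hc using hO
  refine ⟨c, a, fun p q => ?_, hc, ha⟩
  have h1 := hc p q
  rw [T'.symm, T.symm, hc q p] at h1
  exact (C_injective _ _ (add_left_cancel h1)).symm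

/-- Changing a tau-structure by constants. -/
def tauShift (T : TauStructure) (c : ℕ → ℕ → ℤ) (a : ℕ → ℤ) (hc : ∀ p q, c p q = c q p) :
    TauStructure where
  Ω p q := T.Ω p q + MvPolynomial.C (c p q)
  S p := T.S p + MvPolynomial.C (a p)
  symm p q := by rw [T.symm, hc]
  compat p q r := by
    rw [map_add, map_add, derivation_C, derivation_C, T.compat]
  shift_eq p q := by
    rw [map_add, map_add, derivation_C, Λs_C, ← T.shift_eq]; ring
  w_eq p := by
    rw [map_add, Λs_symm_C, ← T.w_eq]; ring

lemma TauStructure.eq_of {T T' : TauStructure} (h1 : ∀ p q, T.Ω p q = T'.Ω p q)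
    (h2 : ∀ p, T.S p = T'.S p) : T = T' := by
  cases T; cases T'
  simp only [TauStructure.mk.injEq]
  exact ⟨funext fun p => funext fun q => h1 p q, funext h2⟩

/-- A tau-structure associated to the Toda lattice derivations exists,
and it is unique up to replacing Ω_{p,q} by Ω_{p,q} + c_{p,q} and S_p by S_p + a_p,
where c_{p,q} = c_{q,p} and a_p are arbitrary constants (and any such replacement is
again a tau-structure). In particular, there is a unique canonical tau-structure, i.e.,
one for which every Ω_{p,q} and every S_p vanishes under v_i = 0, w_i = 0 (i ∈ ℤ). -/
theorem tau_structure_exists_unique :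
    (∃ _ : TauStructure, True) ∧
    (∀ T T' : TauStructure, ∃ (c : ℕ → ℕ → ℤ) (a : ℕ → ℤ),
      (∀ p q, c p q = c q p) ∧
      (∀ p q, T'.Ω p q = T.Ω p q + MvPolynomial.C (c p q)) ∧
      (∀ p, T'.S p = T.S p + MvPolynomial.C (a p))) ∧
    (∀ (T : TauStructure) (c : ℕ → ℕ → ℤ) (a : ℕ → ℤ), (∀ p q, c p q = c q p) →
      ∃ T' : TauStructure,
        (∀ p q, T'.Ω p q = T.Ω p q + MvPolynomial.C (c p q)) ∧
        (∀ p, T'.S p = T.S p + MvPolynomial.C (a p))) ∧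
    (∃! T : TauStructure, T.IsCanonical) := by
  refine ⟨⟨tau0, trivial⟩, tau_unique, fun T c a hc =>
    ⟨tauShift T c a hc, fun _ _ => rfl, fun _ => rfl⟩, tau0, ⟨fun p q => ev0_Om p q, fun p => ?_⟩, ?_⟩
  · have h := ev0_Lpow (p + 1) 0
    rw [if_neg (by omega)] at h
    exact h
  · intro T hT
    have h0 : ∀ p, ev0 (tau0.S p) = 0 := by
      intro p
      have h := ev0_Lpow (p + 1) 0
      rw [if_neg (by omega)] at h
      exact h
    have h1 : ∀ p q, ev0 (tau0.Ω p q) = 0 := ev0_Om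
    obtain ⟨c, a, -, hc, ha⟩ := tau_unique tau0 T
    apply TauStructure.eq_of
    · intro p q
      have h := hT.1 p q
      have h3 := h1 p q
      rw [hc, map_add, h3] at h
      simp at h
      rw [hc, h]; simp
    · intro p
      have h := hT.2 p
      have h3 := h0 p
      rw [ha, map_add, h3] at h
      simp at h
      rw [ha, h]; simp

end
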